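/- Assume that for every i ∈ [6], every vertex v ∈ V_i, and all distinct j, k ∈ [6]∖{i}, there exist v_j ∈ V_j and v_k ∈ V_k with {v, v_j, v_k} ∈ E. Then diam(G_S) ≤ 2 if and only if there is no independent set (v_1,…,v_6) ∈ V_1×⋯×V_6 in G, i.e., no tuple such that no 3-element subset of {v_1,…,v_6} is a hyperedge of E. -/

import Mathlib

open scoped Classical

/-- A vertex of the 6-partite 3-uniform hypergraph: a part `ℓ ∈ Fin 6` together with a
value in `[n]` (represented by `Fin n`). -/
abbrev HypVert (n : ℕ) := Fin 6 × Fin n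

/-- The value `v/(n+1)` associated to a vertex value `v ∈ [n]` (here `v : Fin n` represents
the value `v+1 ∈ [n]`). -/
noncomputable def hval (n : ℕ) (v : Fin n) : ℝ := ((v : ℕ) + 1) / ((n : ℝ) + 1)

/-- The set of parts met by a set of hypergraph vertices. -/
def hparts {n : ℕ} (e : Finset (HypVert n)) : Finset (Fin 6) := e.image Prod.fst

/-- The hyperedge set is well-formed: every hyperedge consists of `3` vertices lying in
three pairwise distinct parts. -/
def WellFormed {n : ℕ} (E : Set (Finset (HypVert n))) : Prop :=
  ∀ e ∈ E, e.card = 3 ∧ (hparts e).card = 3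

/-- The vertex triple `{(1, x₁), (2, x₂), (3, x₃)}` (parts `1,2,3`, `0`-based `0,1,2`). -/
def tripleL {n : ℕ} (x : Fin 3 → Fin n) : Finset (HypVert n) :=
  Finset.univ.image fun ℓ : Fin 3 => ((⟨(ℓ : ℕ), by have := ℓ.isLt; omega⟩ : Fin 6), x ℓ)

/-- The vertex triple `{(4, y₄), (5, y₅), (6, y₆)}` (parts `4,5,6`, `0`-based `3,4,5`). -/
def tripleR {n : ℕ} (y : Fin 3 → Fin n) : Finset (HypVert n) :=
  Finset.univ.image fun ℓ : Fin 3 => ((⟨(ℓ : ℕ) + 3, by have := ℓ.isLt; omega⟩ : Fin 6), y ℓ)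

/-- The left-half center `X x`: in the coordinate pair of part `ℓ ∈ {1,2,3}` it equals
`(x_ℓ/(n+1), 1 − x_ℓ/(n+1))`, and it equals `(2,2)` in the coordinate pairs of parts
`4,5,6`.  (The `12` coordinates are indexed by `Fin 6 × Fin 2`: a part and a position
within its coordinate pair.) -/
noncomputable def Xpt (n : ℕ) (x : Fin 3 → Fin n) : Fin 6 × Fin 2 → ℝ := fun p =>
  if h : (p.1 : ℕ) < 3 then
    (if p.2 = 0 then hval n (x ⟨(p.1 : ℕ), h⟩) else 1 - hval n (x ⟨(p.1 : ℕ), h⟩))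
  else 2

/-- The right-half center `Y y`: `(2,2)` in the coordinate pairs of parts `1,2,3` and
`(y_ℓ/(n+1), 1 − y_ℓ/(n+1))` in the coordinate pair of part `ℓ ∈ {4,5,6}`. -/
noncomputable def Ypt (n : ℕ) (y : Fin 3 → Fin n) : Fin 6 × Fin 2 → ℝ := fun p =>
  if h : 3 ≤ (p.1 : ℕ) then
    (if p.2 = 0 then hval n (y ⟨(p.1 : ℕ) - 3, by have := p.1.isLt; omega⟩)
     else 1 - hval n (y ⟨(p.1 : ℕ) - 3, by have := p.1.isLt; omega⟩))
  else 2

/-- The edge center of a hyperedge `e`: in the coordinate pair of a part `ℓ` met by `e`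
(with vertex value `v`) it equals `(1 + v/(n+1), 2 − v/(n+1))`, and it equals `(1,1)` in the
coordinate pairs of all other parts. -/
noncomputable def Ept (n : ℕ) (e : Finset (HypVert n)) : Fin 6 × Fin 2 → ℝ := fun p =>
  if (∃ v : Fin n, (p.1, v) ∈ e) then
    (if p.2 = 0 then 1 + ∑ v : Fin n, (if (p.1, v) ∈ e then hval n v else 0)
     else 2 - ∑ v : Fin n, (if (p.1, v) ∈ e then hval n v else 0))
  else 1

/-- Vertices of the hypercube-center graph `G_S`: left-half centers for non-hyperedge
triples from `V₁ × V₂ × V₃`, right-half centers for non-hyperedge triples from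
`V₄ × V₅ × V₆`, and edge centers for hyperedges whose parts lie neither all in `{1,2,3}`
nor all in `{4,5,6}`. -/
inductive GSVert (n : ℕ) (E : Set (Finset (HypVert n))) : Type where
  | left (x : Fin 3 → Fin n) (h : tripleL x ∉ E)
  | right (y : Fin 3 → Fin n) (h : tripleR y ∉ E)
  | edge (e : Finset (HypVert n)) (he : e ∈ E)
      (h1 : ¬ hparts e ⊆ ({0, 1, 2} : Finset (Fin 6)))
      (h2 : ¬ hparts e ⊆ ({3, 4, 5} : Finset (Fin 6)))

/-- The center in `ℝ^12` associated to each vertex of `G_S`. -/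
noncomputable def gsPos {n : ℕ} {E : Set (Finset (HypVert n))} :
    GSVert n E → (Fin 6 × Fin 2 → ℝ)
  | .left x _ => Xpt n x
  | .right y _ => Ypt n y
  | .edge e _ _ _ => Ept n e

/-- The hypercube-center graph `G_S`: two distinct centers are adjacent iff their
`ℓ∞`-distance is at most `1` (the distance on `Fin 6 × Fin 2 → ℝ` is the sup-metric), i.e.
iff the closed axis-parallel unit hypercubes around them intersect. -/
noncomputable def gsGraph (n : ℕ) (E : Set (Finset (HypVert n))) :
    SimpleGraph (GSVert n E) :=
  SimpleGraph.fromRel fun u v => dist (gsPos u) (gsPos v) ≤ 1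

/-!
An `X`-center and a `Y`-center are never adjacent, so a path of length two between them passes
through an edge center `e`. In the two coordinates of a part, the half center `(s, 1 - s)` and the
edge center `(1 + t, 2 - t)` force `s ≥ t` and `s ≤ t` respectively, so a half center is adjacent to
`e` exactly when it agrees with `e` on its half. Hence `X x` and `Y y` are within distance two iff
`x` and `y` together contain a hyperedge. All other pairs are within distance two because each of
the three families of centers is a clique and every half center has a neighboring edge center.
-/

section Graph

variable {V : Type*} {G : SimpleGraph V} {u v : V}

theorem edist_le_two_iff_exists_edist_le_one :
    G.edist u v ≤ 2 ↔ ∃ w, G.edist u w ≤ 1 ∧ G.edist w v ≤ 1 := by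
  constructor
  · intro h
    by_contra! hw
    have hne : u ≠ v := by
      rintro rfl
      simpa using hw u
    have hadj : ¬ G.Adj u v := fun hadj => by
      simpa using hw v (SimpleGraph.edist_le_one_iff_adj_or_eq.mpr (.inl hadj))
    refine h.not_gt (SimpleGraph.two_lt_edist_iff.mpr ⟨hne, hadj, ?_⟩)
    refine Set.eq_empty_of_forall_notMem fun w ⟨huw, hvw⟩ => (hw w ?_).not_ge ?_
    · exact SimpleGraph.edist_le_one_iff_adj_or_eq.mpr (.inl huw)
    · exact SimpleGraph.edist_le_one_iff_adj_or_eq.mpr (.inl (G.adj_symm hvw))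
  · rintro ⟨w, huw, hwv⟩
    calc G.edist u v ≤ G.edist u w + G.edist w v := SimpleGraph.edist_triangle
      _ ≤ 1 + 1 := add_le_add huw hwv
      _ = 2 := one_add_one_eq_two

end Graph

section Coordinates

/-- The coordinate pair `(t, 1 - t)` encoding the value `t`. -/
def coordPair (t : ℝ) (i : Fin 2) : ℝ := if i = 0 then t else 1 - t

theorem coordPair_mem_Icc {t : ℝ} (ht : t ∈ Set.Icc (0 : ℝ) 1) (i : Fin 2) :
    coordPair t i ∈ Set.Icc (0 : ℝ) 1 := by
  obtain ⟨h₀, h₁⟩ := ht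
  unfold coordPair
  split_ifs <;> constructor <;> linarith

theorem forall_dist_coordPair_one_add_le_one_iff {s t : ℝ} :
    (∀ i, dist (coordPair s i) (1 + coordPair t i) ≤ 1) ↔ s = t := by
  constructor
  · intro h
    have h₀ : |s - (1 + t)| ≤ 1 := h 0
    have h₁ : |1 - s - (1 + (1 - t))| ≤ 1 := h 1
    have hts : t ≤ s := by linarith [(abs_le.mp h₀).1]
    have hst : s ≤ t := by linarith [(abs_le.mp h₁).1]
    exact le_antisymm hst hts
  · rintro rfl i
    simp

theorem hval_mem_Ioo {n : ℕ} (v : Fin n) : hval n v ∈ Set.Ioo (0 : ℝ) 1 := by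
  have hv : ((v : ℕ) : ℝ) < n := mod_cast v.isLt
  unfold hval
  exact ⟨by positivity, (div_lt_one (by positivity)).mpr (by linarith)⟩

theorem hval_mem_Icc {n : ℕ} (v : Fin n) : hval n v ∈ Set.Icc (0 : ℝ) 1 :=
  Set.Ioo_subset_Icc_self (hval_mem_Ioo v)

theorem hval_injective (n : ℕ) : Function.Injective (hval n) := by
  intro a b h
  have hab : ((a : ℕ) : ℝ) + 1 = (b : ℕ) + 1 := (div_left_inj' (by positivity)).mp h
  exact Fin.ext (Nat.cast_injective (add_right_cancel hab))

end Coordinates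

section HalfCenter

variable {ι : Type*} {n : ℕ}

/-- The center that encodes the tuple `v` in the coordinate pairs of the parts in `S` and equals
`(2, 2)` in all others: the common form of the `X`-centers and the `Y`-centers. -/
noncomputable def halfCenter (S : Finset ι) (v : ι → Fin n) : ι × Fin 2 → ℝ := fun p =>
  if p.1 ∈ S then coordPair (hval n (v p.1)) p.2 else 2

theorem halfCenter_of_mem {S : Finset ι} {ℓ : ι} (h : ℓ ∈ S) (v : ι → Fin n) (i : Fin 2) :
    halfCenter S v (ℓ, i) = coordPair (hval n (v ℓ)) i :=
  if_pos h

theorem halfCenter_of_notMem {S : Finset ι} {ℓ : ι} (h : ℓ ∉ S) (v : ι → Fin n) (i : Fin 2) :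
    halfCenter S v (ℓ, i) = 2 :=
  if_neg h

theorem halfCenter_mem_Icc {S : Finset ι} {ℓ : ι} (h : ℓ ∈ S) (v : ι → Fin n) (i : Fin 2) :
    halfCenter S v (ℓ, i) ∈ Set.Icc (0 : ℝ) 1 := by
  rw [halfCenter_of_mem h]
  exact coordPair_mem_Icc (hval_mem_Icc _) i

variable [Fintype ι]

theorem dist_halfCenter_le_one (S : Finset ι) (v w : ι → Fin n) :
    dist (halfCenter S v) (halfCenter S w) ≤ 1 := by
  refine (dist_pi_le_iff zero_le_one).mpr fun ⟨ℓ, i⟩ => ?_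
  by_cases hℓ : ℓ ∈ S
  · exact Real.dist_le_of_mem_Icc_01 (halfCenter_mem_Icc hℓ v i) (halfCenter_mem_Icc hℓ w i)
  · simp [halfCenter_of_notMem hℓ]

theorem one_lt_dist_halfCenter {S T : Finset ι} {ℓ : ι} (hS : ℓ ∈ S) (hT : ℓ ∉ T)
    (v w : ι → Fin n) : 1 < dist (halfCenter S v) (halfCenter T w) := by
  have hv : hval n (v ℓ) < 1 := (hval_mem_Ioo (v ℓ)).2
  calc 1 < |hval n (v ℓ) - 2| := lt_abs.mpr (.inr (by linarith))
    _ = dist (halfCenter S v (ℓ, 0)) (halfCenter T w (ℓ, 0)) := by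
      rw [halfCenter_of_mem hS, halfCenter_of_notMem hT, Real.dist_eq, coordPair, if_pos rfl]
    _ ≤ dist (halfCenter S v) (halfCenter T w) := dist_le_pi_dist _ _ _

end HalfCenter

section Hypergraph

variable {n : ℕ} {E : Set (Finset (HypVert n))} {e : Finset (HypVert n)} {x y : Fin 3 → Fin n}

/-- The parts `V₁, V₂, V₃`. -/
abbrev leftParts : Finset (Fin 6) := {0, 1, 2}

/-- The parts `V₄, V₅, V₆`. -/
abbrev rightParts : Finset (Fin 6) := {3, 4, 5}

/-- The vertices that the tuple `v` selects in the parts `S`. -/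
def transversal (S : Finset (Fin 6)) (v : Fin 6 → Fin n) : Finset (HypVert n) :=
  S.image fun ℓ => (ℓ, v ℓ)

/-- A vertex set is crossing if neither half of the parts contains all its parts; the crossing
hyperedges are those with an edge center. -/
def IsCrossing (e : Finset (HypVert n)) : Prop :=
  ¬ hparts e ⊆ leftParts ∧ ¬ hparts e ⊆ rightParts

/-- Some crossing hyperedge of `E` selects in the parts `S` only vertices of `t`. For a half
center with triple `t` this says that it is adjacent to some edge center. -/
def HasCrossingEdge (E : Set (Finset (HypVert n))) (S : Finset (Fin 6))
    (t : Finset (HypVert n)) : Prop :=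
  ∃ e ∈ E, IsCrossing e ∧ ∀ p ∈ e, p.1 ∈ S → p ∈ t

theorem mem_hparts {ℓ : Fin 6} : ℓ ∈ hparts e ↔ ∃ v, (ℓ, v) ∈ e := by
  simp [hparts]

theorem mem_transversal {S : Finset (Fin 6)} {v : Fin 6 → Fin n} {p : HypVert n} :
    p ∈ transversal S v ↔ p.1 ∈ S ∧ v p.1 = p.2 := by
  simp [transversal, Prod.ext_iff]

theorem tripleL_eq_transversal (x y : Fin 3 → Fin n) :
    tripleL x = transversal leftParts (Fin.append x y) :=
  rfl

theorem tripleR_eq_transversal (x y : Fin 3 → Fin n) :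
    tripleR y = transversal rightParts (Fin.append x y) :=
  rfl

theorem tripleL_union_tripleR (x y : Fin 3 → Fin n) :
    tripleL x ∪ tripleR y = transversal Finset.univ (Fin.append x y) := by
  rw [tripleL_eq_transversal x y, tripleR_eq_transversal x y, transversal, transversal,
    ← Finset.image_union]
  rfl

theorem subset_transversal_univ_iff {S T : Finset (Fin 6)} (h : S ∪ T = Finset.univ)
    {v : Fin 6 → Fin n} :
    e ⊆ transversal Finset.univ v ↔
      (∀ p ∈ e, p.1 ∈ S → p ∈ transversal S v) ∧ ∀ p ∈ e, p.1 ∈ T → p ∈ transversal T v := by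
  simp only [Finset.subset_iff, mem_transversal, Finset.mem_univ, true_and]
  constructor
  · exact fun hv => ⟨fun p hp hS => ⟨hS, hv hp⟩, fun p hp hT => ⟨hT, hv hp⟩⟩
  · rintro ⟨hS, hT⟩ p hp
    rcases Finset.mem_union.mp (h ▸ Finset.mem_univ p.1) with hpS | hpT
    · exact (hS p hp hpS).2
    · exact (hT p hp hpT).2

theorem subset_tripleL_union_tripleR_iff :
    e ⊆ tripleL x ∪ tripleR y ↔
      (∀ p ∈ e, p.1 ∈ leftParts → p ∈ tripleL x) ∧ ∀ p ∈ e, p.1 ∈ rightParts → p ∈ tripleR y := by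
  rw [tripleL_union_tripleR, tripleL_eq_transversal x y, tripleR_eq_transversal x y]
  exact subset_transversal_univ_iff (by decide)

theorem WellFormed.eq_of_mem (hE : WellFormed E) (he : e ∈ E) {ℓ : Fin 6} {v w : Fin n}
    (hv : (ℓ, v) ∈ e) (hw : (ℓ, w) ∈ e) : v = w := by
  have hinj : Set.InjOn Prod.fst (e : Set (HypVert n)) :=
    Finset.card_image_iff.mp ((hE e he).2.trans (hE e he).1.symm)
  exact congrArg Prod.snd (hinj hv hw rfl)

theorem WellFormed.eq_of_hparts_subset (hE : WellFormed E) (he : e ∈ E) {S : Finset (Fin 6)}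
    {t : Finset (HypVert n)} (ht : t.card ≤ 3) (hS : hparts e ⊆ S)
    (h : ∀ p ∈ e, p.1 ∈ S → p ∈ t) : e = t :=
  Finset.eq_of_subset_of_card_le
    (fun p hp => h p hp (hS (Finset.mem_image_of_mem Prod.fst hp))) (ht.trans (hE e he).1.ge)

theorem WellFormed.isCrossing (hE : WellFormed E) (he : e ∈ E) (hx : tripleL x ∉ E)
    (hy : tripleR y ∉ E) (h : e ⊆ tripleL x ∪ tripleR y) : IsCrossing e := by
  obtain ⟨hL, hR⟩ := subset_tripleL_union_tripleR_iff.mp h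
  have hcardL : (tripleL x).card ≤ 3 := Finset.card_image_le.trans (by simp)
  have hcardR : (tripleR y).card ≤ 3 := Finset.card_image_le.trans (by simp)
  exact ⟨fun hS => hx (hE.eq_of_hparts_subset he hcardL hS hL ▸ he),
    fun hS => hy (hE.eq_of_hparts_subset he hcardR hS hR ▸ he)⟩

section Extension

variable (htech : ∀ (w : HypVert n) (j k : Fin 6), j ≠ k → j ≠ w.1 → k ≠ w.1 →
  ∃ vj vk : Fin n, ({w, (j, vj), (k, vk)} : Finset (HypVert n)) ∈ E)

include htech

theorem exists_mem_forall_mem_transversal {S : Finset (Fin 6)} {i j k : Fin 6} (hi : i ∈ S)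
    (hj : j ∉ S) (hk : k ∉ S) (hjk : j ≠ k) (v : Fin 6 → Fin n) :
    ∃ e ∈ E, i ∈ hparts e ∧ j ∈ hparts e ∧ ∀ p ∈ e, p.1 ∈ S → p ∈ transversal S v := by
  obtain ⟨a, b, he⟩ := htech (i, v i) j k hjk (ne_of_mem_of_not_mem hi hj).symm
    (ne_of_mem_of_not_mem hi hk).symm
  refine ⟨_, he, mem_hparts.mpr ⟨v i, by simp⟩, mem_hparts.mpr ⟨a, by simp⟩, ?_⟩
  simp only [Finset.mem_insert, Finset.mem_singleton]
  rintro p (rfl | rfl | rfl) hp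
  · exact mem_transversal.mpr ⟨hp, rfl⟩
  · exact absurd hp hj
  · exact absurd hp hk

theorem hasCrossingEdge_tripleL (x : Fin 3 → Fin n) : HasCrossingEdge E leftParts (tripleL x) := by
  obtain ⟨e, he, hi, hj, hx⟩ := exists_mem_forall_mem_transversal htech (S := leftParts)
    (i := 0) (j := 3) (k := 4) (by decide) (by decide) (by decide) (by decide) (Fin.append x x)
  exact ⟨e, he, ⟨fun h => absurd (h hj) (by decide), fun h => absurd (h hi) (by decide)⟩, hx⟩

theorem hasCrossingEdge_tripleR (y : Fin 3 → Fin n) :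
    HasCrossingEdge E rightParts (tripleR y) := by
  obtain ⟨e, he, hi, hj, hy⟩ := exists_mem_forall_mem_transversal htech (S := rightParts)
    (i := 3) (j := 0) (k := 1) (by decide) (by decide) (by decide) (by decide) (Fin.append y y)
  exact ⟨e, he, ⟨fun h => absurd (h hi) (by decide), fun h => absurd (h hj) (by decide)⟩, hy⟩

end Extension

end Hypergraph

section Centers

variable {n : ℕ} {E : Set (Finset (HypVert n))} {e f : Finset (HypVert n)} {x y : Fin 3 → Fin n}

theorem Ept_of_mem (hE : WellFormed E) (he : e ∈ E) {ℓ : Fin 6} {v : Fin n} (hv : (ℓ, v) ∈ e)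
    (i : Fin 2) : Ept n e (ℓ, i) = 1 + coordPair (hval n v) i := by
  have hsum : ∑ w : Fin n, (if (ℓ, w) ∈ e then hval n w else 0) = hval n v := by
    rw [Finset.sum_eq_single v (fun w _ hne => if_neg fun hw => hne (hE.eq_of_mem he hw hv))
      (by simp), if_pos hv]
  simp only [Ept, hsum, if_pos (⟨v, hv⟩ : ∃ v, (ℓ, v) ∈ e), coordPair]
  split_ifs <;> ring

theorem Ept_of_notMem_hparts {ℓ : Fin 6} (h : ℓ ∉ hparts e) (i : Fin 2) : Ept n e (ℓ, i) = 1 :=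
  if_neg (mem_hparts.not.mp h)

theorem Ept_mem_Icc (hE : WellFormed E) (he : e ∈ E) (p : Fin 6 × Fin 2) :
    Ept n e p ∈ Set.Icc (1 : ℝ) 2 := by
  obtain ⟨ℓ, i⟩ := p
  by_cases h : ℓ ∈ hparts e
  · obtain ⟨v, hv⟩ := mem_hparts.mp h
    obtain ⟨h₀, h₁⟩ := coordPair_mem_Icc (hval_mem_Icc v) i
    rw [Ept_of_mem hE he hv]
    constructor <;> linarith
  · rw [Ept_of_notMem_hparts h]
    norm_num

theorem dist_Ept_Ept_le_one (hE : WellFormed E) (he : e ∈ E) (hf : f ∈ E) :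
    dist (Ept n e) (Ept n f) ≤ 1 :=
  (dist_pi_le_iff zero_le_one).mpr fun p =>
    (Real.dist_le_of_mem_Icc (Ept_mem_Icc hE he p) (Ept_mem_Icc hE hf p)).trans (by norm_num)

theorem dist_halfCenter_Ept_le_one_iff (hE : WellFormed E) (he : e ∈ E) {S : Finset (Fin 6)}
    {v : Fin 6 → Fin n} :
    dist (halfCenter S v) (Ept n e) ≤ 1 ↔ ∀ p ∈ e, p.1 ∈ S → p ∈ transversal S v := by
  rw [dist_pi_le_iff zero_le_one]
  constructor
  · rintro h ⟨ℓ, a⟩ ha hℓ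
    have hval_eq : hval n (v ℓ) = hval n a := by
      refine forall_dist_coordPair_one_add_le_one_iff.mp fun i => ?_
      rw [← halfCenter_of_mem hℓ, ← Ept_of_mem hE he ha]
      exact h (ℓ, i)
    exact mem_transversal.mpr ⟨hℓ, hval_injective n hval_eq⟩
  · rintro h ⟨ℓ, i⟩
    by_cases hℓ : ℓ ∈ S
    · by_cases hmet : ℓ ∈ hparts e
      · obtain ⟨a, ha⟩ := mem_hparts.mp hmet
        have hva : v ℓ = a := (mem_transversal.mp (h _ ha hℓ)).2
        rw [halfCenter_of_mem hℓ, Ept_of_mem hE he ha, hva]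
        exact forall_dist_coordPair_one_add_le_one_iff.mpr rfl i
      · rw [Ept_of_notMem_hparts hmet]
        exact Real.dist_le_of_mem_Icc_01 (halfCenter_mem_Icc hℓ v i) (by simp)
    · rw [halfCenter_of_notMem hℓ]
      exact (Real.dist_le_of_mem_Icc (by norm_num) (Ept_mem_Icc hE he _)).trans (by norm_num)

theorem Xpt_eq_halfCenter (x y : Fin 3 → Fin n) :
    Xpt n x = halfCenter leftParts (Fin.append x y) := by
  ext ⟨ℓ, i⟩
  fin_cases ℓ <;> simp [Xpt, halfCenter, coordPair] <;> rfl

theorem Ypt_eq_halfCenter (x y : Fin 3 → Fin n) :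
    Ypt n y = halfCenter rightParts (Fin.append x y) := by
  ext ⟨ℓ, i⟩
  fin_cases ℓ <;> simp [Ypt, halfCenter, coordPair] <;> rfl

theorem dist_Xpt_Xpt_le_one (x x' : Fin 3 → Fin n) : dist (Xpt n x) (Xpt n x') ≤ 1 := by
  rw [Xpt_eq_halfCenter x x, Xpt_eq_halfCenter x' x']
  exact dist_halfCenter_le_one _ _ _

theorem dist_Ypt_Ypt_le_one (y y' : Fin 3 → Fin n) : dist (Ypt n y) (Ypt n y') ≤ 1 := by
  rw [Ypt_eq_halfCenter y y, Ypt_eq_halfCenter y' y']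
  exact dist_halfCenter_le_one _ _ _

theorem one_lt_dist_Xpt_Ypt (x y : Fin 3 → Fin n) : 1 < dist (Xpt n x) (Ypt n y) := by
  rw [Xpt_eq_halfCenter x y, Ypt_eq_halfCenter x y]
  exact one_lt_dist_halfCenter (ℓ := 0) (by decide) (by decide) _ _

theorem dist_Xpt_Ept_le_one_iff (hE : WellFormed E) (he : e ∈ E) :
    dist (Xpt n x) (Ept n e) ≤ 1 ↔ ∀ p ∈ e, p.1 ∈ leftParts → p ∈ tripleL x := by
  rw [Xpt_eq_halfCenter x x, tripleL_eq_transversal x x]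
  exact dist_halfCenter_Ept_le_one_iff hE he

theorem dist_Ypt_Ept_le_one_iff (hE : WellFormed E) (he : e ∈ E) :
    dist (Ypt n y) (Ept n e) ≤ 1 ↔ ∀ p ∈ e, p.1 ∈ rightParts → p ∈ tripleR y := by
  rw [Ypt_eq_halfCenter y y, tripleR_eq_transversal y y]
  exact dist_halfCenter_Ept_le_one_iff hE he

end Centers

section CenterGraph

variable {n : ℕ} {E : Set (Finset (HypVert n))} {e f : Finset (HypVert n)} {x y : Fin 3 → Fin n}

theorem gsGraph_edist_le_one_iff {u v : GSVert n E} :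
    (gsGraph n E).edist u v ≤ 1 ↔ dist (gsPos u) (gsPos v) ≤ 1 := by
  rw [SimpleGraph.edist_le_one_iff_adj_or_eq, gsGraph, SimpleGraph.fromRel_adj,
    dist_comm (gsPos v), or_self]
  rcases eq_or_ne u v with rfl | huv
  · simp
  · simp [huv]

theorem gsGraph_edist_le_two_iff {u v : GSVert n E} :
    (gsGraph n E).edist u v ≤ 2 ↔
      ∃ w : GSVert n E, dist (gsPos u) (gsPos w) ≤ 1 ∧ dist (gsPos w) (gsPos v) ≤ 1 := by
  simp only [edist_le_two_iff_exists_edist_le_one, gsGraph_edist_le_one_iff]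

theorem gsGraph_edist_le_two_of_dist_le_one {u v : GSVert n E} (h : dist (gsPos u) (gsPos v) ≤ 1) :
    (gsGraph n E).edist u v ≤ 2 :=
  (gsGraph_edist_le_one_iff.mpr h).trans one_le_two

theorem gsGraph_edist_left_right_le_two_iff (hE : WellFormed E) (hx : tripleL x ∉ E)
    (hy : tripleR y ∉ E) :
    (gsGraph n E).edist (.left x hx) (.right y hy) ≤ 2 ↔ ∃ e ∈ E, e ⊆ tripleL x ∪ tripleR y := by
  rw [gsGraph_edist_le_two_iff]
  constructor
  · rintro ⟨w, hxw, hwy⟩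
    match w with
    | .left x' _ => exact absurd hwy (one_lt_dist_Xpt_Ypt x' y).not_ge
    | .right y' _ => exact absurd hxw (one_lt_dist_Xpt_Ypt x y').not_ge
    | .edge e he _ _ =>
      exact ⟨e, he, subset_tripleL_union_tripleR_iff.mpr
        ⟨(dist_Xpt_Ept_le_one_iff hE he).mp hxw,
          (dist_Ypt_Ept_le_one_iff hE he).mp ((dist_comm _ _).trans_le hwy)⟩⟩
  · rintro ⟨e, he, hsub⟩
    obtain ⟨h₁, h₂⟩ := hE.isCrossing he hx hy hsub
    obtain ⟨hL, hR⟩ := subset_tripleL_union_tripleR_iff.mp hsub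
    exact ⟨.edge e he h₁ h₂, (dist_Xpt_Ept_le_one_iff hE he).mpr hL,
      (dist_comm _ _).trans_le ((dist_Ypt_Ept_le_one_iff hE he).mpr hR)⟩

section CrossingEdge

variable (hE : WellFormed E) (hL : ∀ x, tripleL x ∉ E → HasCrossingEdge E leftParts (tripleL x))
  (hR : ∀ y, tripleR y ∉ E → HasCrossingEdge E rightParts (tripleR y))

include hE hL hR

theorem exists_dist_Ept_le_one (u : GSVert n E) :
    ∃ e ∈ E, IsCrossing e ∧ dist (gsPos u) (Ept n e) ≤ 1 := by
  match u with
  | .left x hx =>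
    obtain ⟨e, he, hcross, hxe⟩ := hL x hx
    exact ⟨e, he, hcross, (dist_Xpt_Ept_le_one_iff hE he).mpr hxe⟩
  | .right y hy =>
    obtain ⟨e, he, hcross, hye⟩ := hR y hy
    exact ⟨e, he, hcross, (dist_Ypt_Ept_le_one_iff hE he).mpr hye⟩
  | .edge e he h₁ h₂ => exact ⟨e, he, ⟨h₁, h₂⟩, (dist_self _).trans_le zero_le_one⟩

theorem gsGraph_edist_edge_le_two (u : GSVert n E) (hf : f ∈ E) (h₁ : ¬ hparts f ⊆ leftParts)
    (h₂ : ¬ hparts f ⊆ rightParts) : (gsGraph n E).edist u (.edge f hf h₁ h₂) ≤ 2 := by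
  obtain ⟨e, he, hcross, hue⟩ := exists_dist_Ept_le_one hE hL hR u
  exact gsGraph_edist_le_two_iff.mpr
    ⟨.edge e he hcross.1 hcross.2, hue, dist_Ept_Ept_le_one hE he hf⟩

theorem gsGraph_ediam_le_two (h : ∀ x y : Fin 3 → Fin n, ∃ e ∈ E, e ⊆ tripleL x ∪ tripleR y) :
    (gsGraph n E).ediam ≤ 2 := by
  refine SimpleGraph.ediam_le_of_edist_le fun u v => ?_
  match u, v with
  | .left x _, .left x' _ => exact gsGraph_edist_le_two_of_dist_le_one (dist_Xpt_Xpt_le_one x x')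
  | .right y _, .right y' _ => exact gsGraph_edist_le_two_of_dist_le_one (dist_Ypt_Ypt_le_one y y')
  | .left x hx, .right y hy => exact (gsGraph_edist_left_right_le_two_iff hE hx hy).mpr (h x y)
  | .right y hy, .left x hx =>
    rw [SimpleGraph.edist_comm]
    exact (gsGraph_edist_left_right_le_two_iff hE hx hy).mpr (h x y)
  | u, .edge _ hf h₁ h₂ => exact gsGraph_edist_edge_le_two hE hL hR u hf h₁ h₂
  | .edge _ hf h₁ h₂, v =>
    rw [SimpleGraph.edist_comm]
    exact gsGraph_edist_edge_le_two hE hL hR v hf h₁ h₂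

end CrossingEdge

theorem gsGraph_diam_le_two_iff_general (hE : WellFormed E)
    (hL : ∀ x, tripleL x ∉ E → HasCrossingEdge E leftParts (tripleL x))
    (hR : ∀ y, tripleR y ∉ E → HasCrossingEdge E rightParts (tripleR y)) :
    (gsGraph n E).ediam ≤ 2 ↔
      ¬ ∃ x y : Fin 3 → Fin n, ∀ e ∈ E, ¬ e ⊆ tripleL x ∪ tripleR y := by
  constructor
  · rintro hdiam ⟨x, y, hxy⟩
    have hx : tripleL x ∉ E := fun hmem => hxy _ hmem Finset.subset_union_left
    have hy : tripleR y ∉ E := fun hmem => hxy _ hmem Finset.subset_union_right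
    obtain ⟨e, he, hsub⟩ := (gsGraph_edist_left_right_le_two_iff hE hx hy).mp
      (SimpleGraph.edist_le_ediam.trans hdiam)
    exact hxy e he hsub
  · intro hindep
    push Not at hindep
    exact gsGraph_ediam_le_two hE hL hR hindep

end CenterGraph

/-- Under the technical assumption that every vertex extends to a
hyperedge through any two other prescribed distinct parts, `G_S` has diameter at most `2`
iff the hypergraph has no independent set choosing one vertex from each part, i.e. no pair
of triples `x, y` such that no hyperedge is contained in `tripleL x ∪ tripleR y`. -/
theorem gsGraph_diam_le_two_iff (n : ℕ) (hn : 1 ≤ n) (E : Set (Finset (HypVert n)))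
    (hE : WellFormed E)
    (htech : ∀ (w : HypVert n) (j k : Fin 6), j ≠ k → j ≠ w.1 → k ≠ w.1 →
      ∃ vj vk : Fin n, ({w, (j, vj), (k, vk)} : Finset (HypVert n)) ∈ E) :
    (gsGraph n E).ediam ≤ 2 ↔
      ¬ ∃ x y : Fin 3 → Fin n, ∀ e ∈ E, ¬ e ⊆ tripleL x ∪ tripleR y :=
  gsGraph_diam_le_two_iff_general hE (fun x _ => hasCrossingEdge_tripleL htech x)
    fun y _ => hasCrossingEdge_tripleR htech y
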